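/- arXiv:2503.03905 — 5 statements merged into one kernel-verified Lean document; each statement's English description precedes it below -/
import Mathlib

section
/- Let t ≤ m be positive integers, F = GaloisField 2 m, T = GaloisField 2 t. Let ⋆ be a left pre-quasifield operation on F, d : F → F → F a right-division map for ⋆, and γ : F → T balanced. Then f : F × F → T defined by f(x,y) = γ(d(x,y)) is a (2m,t)-bent function. -/
noncomputable instance (n : ℕ) : Fintype (GaloisField 2 n) := Fintype.ofFinite _

/-- The sign character of `ZMod 2`: `chi 0 = 1`, `chi 1 = -1`. -/
def chi (x : ZMod 2) : ℤ := if x = 0 then 1 else -1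

/-!
The lines `{(s ⋆ y, y)}`, one for each `s` in `F`, together with `F × {0}` cover the nonzero points
of `F × F` exactly once, and `f` is constant on the nonzero points of each line. The contribution of
the origin cancels because `∑ s, χ (Tr (u * γ s)) = 0` for balanced `γ`. A character of `F × F` sums
to `0` over a line unless it is trivial there, in which case the sum is `|F|`; counting shows that a
character that is nontrivial on `F × {0}` is trivial on exactly one line. Hence a single line
contributes to the Walsh transform, whose value is `± |F|`. If the character is trivial on
`F × {0}`, its sums over all other lines agree, and balancedness leaves only `F × {0}`.
-/

theorem sum_comp_of_ncard_fiber_eq {ι κ M : Type*} [Fintype ι] [Fintype κ] [AddCommMonoid M]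
    {γ : ι → κ} {k : ℕ} (hγ : ∀ j, {i | γ i = j}.ncard = k) (f : κ → M) :
    ∑ i, f (γ i) = k • ∑ j, f j := by
  classical
  have card_fiber (j : κ) : (Finset.univ.filter fun i => γ i = j).card = k := by
    rw [← hγ j, ← Set.ncard_coe_finset, Finset.coe_filter_univ]
  rw [← Finset.sum_fiberwise' Finset.univ γ f]
  simp only [Finset.sum_const, card_fiber, Finset.smul_sum]

/-- A spread set: a family of additive endomorphisms of `V` for which evaluation at every nonzero
vector is a bijection from the index set onto `V`. For finite nonzero `V` this says that the graphs
`{(L s y, y)}` together with `V × {0}` form a spread of `V × V`. The operators `L s = (s ⋆ ·)` of a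
left pre-quasifield are the main example; the family need not contain the zero map. -/
def IsSpreadSet {S V : Type*} [AddCommGroup V] (L : S → V →+ V) : Prop :=
  ∀ y, y ≠ 0 → Function.Bijective fun s => L s y

namespace IsSpreadSet

variable {S V : Type*} [AddCommGroup V] {L : S → V →+ V}

-- The origin lies on every graph; adding `∑ s, h s 0` on the left lets `y` range over all of `V`.
theorem sum_add_sum_zero [Fintype S] [Fintype V] {M : Type*} [AddCommMonoid M]
    (hL : IsSpreadSet L) {d : V → V → S} {c : S} (hd0 : ∀ x, d x 0 = c)
    (hdiv : ∀ x y, y ≠ 0 → L (d x y) y = x) (h : S → V × V → M) :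
    ∑ p, h (d p.1 p.2) p + ∑ s, h s 0 = ∑ s, ∑ y, h s (L s y, y) + ∑ x, h c (x, 0) := by
  classical
  have column (y : V) (hy : y ≠ 0) : ∑ x, h (d x y) (x, y) = ∑ s, h s (L s y, y) := by
    have hd (s : S) : d (L s y) y = s := (hL y hy).injective (hdiv _ _ hy)
    simpa only [hd] using ((hL y hy).sum_comp fun x => h (d x y) (x, y)).symm
  calc
    ∑ p, h (d p.1 p.2) p + ∑ s, h s 0
      = (∑ y ∈ Finset.univ.erase 0, ∑ s, h s (L s y, y)) + ∑ x, h c (x, 0) + ∑ s, h s 0 := by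
        rw [Fintype.sum_prod_type_right, ← Finset.sum_erase_add _ _ (Finset.mem_univ (0 : V)),
          Finset.sum_congr rfl fun y hy => column y (Finset.ne_of_mem_erase hy)]
        simp only [hd0]
    _ = (∑ y ∈ Finset.univ.erase 0, ∑ s, h s (L s y, y)) + ∑ s, h s (L s 0, 0)
          + ∑ x, h c (x, 0) := by
        simp only [map_zero, Prod.mk_zero_zero, add_right_comm]
    _ = ∑ s, ∑ y, h s (L s y, y) + ∑ x, h c (x, 0) := by
        rw [Finset.sum_erase_add _ (fun y => ∑ s, h s (L s y, y)) (Finset.mem_univ 0),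
          Finset.sum_comm]

variable {R : Type*} [CommSemiring R] [IsDomain R] [CharZero R]

theorem sum_sum_addChar_mul [Fintype S] [Fintype V] (hL : IsSpreadSet L) {α : AddChar V R}
    (hα : α ≠ 1) (β : AddChar V R) :
    ∑ s, ∑ y, α (L s y) * β y = Fintype.card S := by
  have column (y : V) (hy : y ≠ 0) : ∑ s, α (L s y) * β y = 0 := by
    rw [← Finset.sum_mul, (hL y hy).sum_comp fun x => α x,
      AddChar.sum_eq_zero_iff_ne_zero.2 hα, zero_mul]
  rw [Finset.sum_comm, Fintype.sum_eq_single 0 column]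
  simp only [map_zero, AddChar.map_zero_eq_one, mul_one, Finset.sum_const, Finset.card_univ,
    nsmul_eq_mul]

theorem existsUnique_compAddMonoidHom_mul_eq_one [Finite V] (hL : IsSpreadSet L)
    {α : AddChar V R} (hα : α ≠ 1) (β : AddChar V R) :
    ∃! s, α.compAddMonoidHom (L s) * β = 1 := by
  classical
  cases nonempty_fintype V
  obtain ⟨v, hv⟩ := AddChar.ne_one_iff.1 hα
  have hv0 : v ≠ 0 := by
    rintro rfl
    exact hv α.map_zero_eq_one
  have := Fintype.ofInjective _ (hL v hv0).injective
  have card_index : Fintype.card S = Fintype.card V := Fintype.card_of_bijective (hL v hv0)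
  have line_sum (s : S) : ∑ y, α (L s y) * β y =
      if α.compAddMonoidHom (L s) * β = 1 then (Fintype.card V : R) else 0 :=
    AddChar.sum_eq_ite (α.compAddMonoidHom (L s) * β)
  have count : (Finset.univ.filter fun s => α.compAddMonoidHom (L s) * β = 1).card *
      Fintype.card V = Fintype.card V := by
    have total := hL.sum_sum_addChar_mul hα β
    simp only [line_sum, ← Finset.sum_filter, Finset.sum_const, nsmul_eq_mul, card_index] at total
    exact_mod_cast total
  rw [Fintype.existsUnique_iff_card_one]
  exact Nat.eq_of_mul_eq_mul_right Fintype.card_pos (count.trans (one_mul _).symm)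

theorem exists_sum_eq_card_mul [Fintype S] [Fintype V] (hL : IsSpreadSet L)
    {d : V → V → S} {c : S} (hd0 : ∀ x, d x 0 = c)
    (hdiv : ∀ x y, y ≠ 0 → L (d x y) y = x) {g : S → R}
    (hg : ∑ s, g s = 0) (α β : AddChar V R) :
    ∃ s, ∑ p : V × V, g (d p.1 p.2) * (α p.1 * β p.2) = Fintype.card V * g s := by
  have split : ∑ p : V × V, g (d p.1 p.2) * (α p.1 * β p.2) =
      ∑ s, g s * ∑ y, α (L s y) * β y + g c * ∑ x, α x := by
    simpa only [Prod.fst_zero, Prod.snd_zero, AddChar.map_zero_eq_one, mul_one, hg, add_zero,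
      Finset.mul_sum] using hL.sum_add_sum_zero hd0 hdiv fun s p => g s * (α p.1 * β p.2)
  rcases eq_or_ne α 1 with rfl | hα
  · refine ⟨c, ?_⟩
    rw [split]
    simp only [AddChar.one_apply, one_mul, ← Finset.sum_mul, hg, zero_mul, zero_add,
      Finset.sum_const, Finset.card_univ, nsmul_eq_mul, mul_one]
    exact mul_comm _ _
  · obtain ⟨s, hs, hs_unique⟩ := hL.existsUnique_compAddMonoidHom_mul_eq_one hα β
    have trivial_line : ∑ y, α (L s y) * β y = Fintype.card V := by
      have apply_eq_one (y : V) : α (L s y) * β y = 1 := AddChar.eq_one_iff.1 hs y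
      simp only [apply_eq_one, Finset.sum_const, Finset.card_univ, nsmul_eq_mul, mul_one]
    have other_line (s' : S) (hs' : s' ≠ s) : ∑ y, α (L s' y) * β y = 0 :=
      AddChar.sum_eq_zero_iff_ne_zero.2 fun h => hs' (hs_unique s' h)
    refine ⟨s, ?_⟩
    rw [split, AddChar.sum_eq_zero_iff_ne_zero.2 hα, mul_zero, add_zero,
      Fintype.sum_eq_single s fun s' hs' => by rw [other_line s' hs', mul_zero], trivial_line,
      mul_comm]

end IsSpreadSet

theorem chi_add (x y : ZMod 2) : chi (x + y) = chi x * chi y := by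
  decide +revert

theorem chi_sq (x : ZMod 2) : chi x ^ 2 = 1 := by
  decide +revert

/-- The additive character `x ↦ (-1) ^ Tr x` of an extension `K` of `ZMod 2`, with integer
values. -/
noncomputable def traceSign (K : Type*) [Field K] [Algebra (ZMod 2) K] : AddChar K ℤ where
  toFun x := chi (Algebra.trace (ZMod 2) K x)
  map_zero_eq_one' := by rw [map_zero]; rfl
  map_add_eq_mul' x y := by rw [map_add, chi_add]

theorem traceSign_apply {K : Type*} [Field K] [Algebra (ZMod 2) K] (x : K) :
    traceSign K x = chi (Algebra.trace (ZMod 2) K x) := rfl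

theorem traceSign_isPrimitive (K : Type*) [Field K] [Finite K] [Algebra (ZMod 2) K] :
    (traceSign K).IsPrimitive := by
  obtain ⟨x, hx⟩ := Algebra.trace_surjective (ZMod 2) K 1
  refine AddChar.IsPrimitive.of_ne_one (AddChar.ne_one_iff.2 ⟨x, ?_⟩)
  rw [traceSign_apply, hx]
  decide

theorem dillon_type_is_bent_general {S V W R : Type*} [Finite S] [AddCommGroup V] [Fintype V]
    [AddCommGroup W] [Finite W] [CommSemiring R] [IsDomain R] [CharZero R]
    {L : S → V →+ V} (hL : IsSpreadSet L) {d : V → V → S} {c : S} (hd0 : ∀ x, d x 0 = c)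
    (hdiv : ∀ x y, y ≠ 0 → L (d x y) y = x) {γ : S → W} {k : ℕ}
    (hγ : ∀ b, {s | γ s = b}.ncard = k) {ψ : AddChar W R} (hψ : ψ ≠ 1) (α β : AddChar V R) :
    ∃ s, ∑ p : V × V, ψ (γ (d p.1 p.2)) * (α p.1 * β p.2) = Fintype.card V * ψ (γ s) := by
  cases nonempty_fintype S
  cases nonempty_fintype W
  refine hL.exists_sum_eq_card_mul hd0 hdiv (g := fun s => ψ (γ s)) ?_ α β
  rw [sum_comp_of_ncard_fiber_eq hγ, AddChar.sum_eq_zero_iff_ne_zero.2 hψ, smul_zero]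

theorem dillon_type_is_bent
    (m t : ℕ) (hm : 0 < m) (ht : 0 < t) (htm : t ≤ m)
    (star : GaloisField 2 m → GaloisField 2 m → GaloisField 2 m)
    (hz1 : ∀ x, star x 0 = 0) (hz2 : ∀ x, star 0 x = 0)
    (hdist : ∀ x y z, star x (y + z) = star x y + star x z)
    (hbij1 : ∀ a, a ≠ 0 → Function.Bijective fun x => star x a)
    (hbij2 : ∀ a, a ≠ 0 → Function.Bijective fun x => star a x)
    (d : GaloisField 2 m → GaloisField 2 m → GaloisField 2 m)
    (hd0 : ∀ x, d x 0 = 0)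
    (hdiv : ∀ x y, y ≠ 0 → star (d x y) y = x)
    (γ : GaloisField 2 m → GaloisField 2 t)
    (hγ : ∀ b, {a | γ a = b}.ncard = 2 ^ (m - t)) :
    ∀ u : GaloisField 2 t, u ≠ 0 → ∀ a b : GaloisField 2 m,
      (∑ p : GaloisField 2 m × GaloisField 2 m,
          chi (Algebra.trace (ZMod 2) (GaloisField 2 t) (u * γ (d p.1 p.2)) +
               Algebra.trace (ZMod 2) (GaloisField 2 m) (a * p.1) +
               Algebra.trace (ZMod 2) (GaloisField 2 m) (b * p.2))) ^ 2
        = 2 ^ (2 * m) := by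
  intro u hu a b
  let L (s : GaloisField 2 m) : GaloisField 2 m →+ GaloisField 2 m :=
    AddMonoidHom.mk' (star s) (hdist s)
  obtain ⟨s, hs⟩ := dillon_type_is_bent_general (L := L) hbij1 hd0 hdiv hγ
    (traceSign_isPrimitive _ hu) ((traceSign _).mulShift a) ((traceSign _).mulShift b)
  simp only [AddChar.mulShift_apply, traceSign_apply, ← chi_add, ← add_assoc] at hs
  rw [hs, mul_pow, chi_sq, mul_one, Fintype.card_eq_nat_card, GaloisField.card 2 m hm.ne',
    Nat.cast_pow, Nat.cast_two, ← pow_mul, mul_comm]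
end

section
/- Let t ≤ m be positive integers, F = GaloisField 2 m, T = GaloisField 2 t. Let ⋆ be a left pre-quasifield operation on F, τ : F → T a surjective 𝔽₂-linear map, σ : F → F a bijection, and h : F → T arbitrary. Then f : F × F → T defined by f(x,y) = τ(σ(y) ⋆ x) + h(y) is a (2m,t)-bent function. -/
/-!
A Maiorana–McFarland function `(x, y) ↦ L y x + h y` has, for a nonzero functional `φ`, the
component `φ ∘ L y` linear in `x`, so summing a character over `x` first kills every `y` except
those where `φ ∘ L y` cancels the linear twist in `x`. If `y ↦ φ ∘ L y` is a bijection onto the dual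
space, exactly one `y` survives and the Walsh coefficient is `|V|` times a character value.
For `L y = τ ∘ (σ y ⋆ ·)` this bijectivity holds: cancellation on the left argument makes
`(c ⋆ ·) - (d ⋆ ·)` injective for `c ≠ d`, hence surjective, so that no nonzero functional
vanishes on its image.
-/

open Module

section Walsh

variable {K U W R : Type*} [CommRing K] [AddCommGroup U] [Module K U] [Fintype U]
  [AddCommGroup W] [Module K W] [CommRing R]

/-- The Walsh coefficient at `α` of the component `φ ∘ f` of a vectorial function `f : U → W`, with
respect to an additive character `χ` of the scalars. Linear functionals take the place of the trace
forms `x ↦ Tr (a * x)`, so no field structure on `U` and `W` is involved. -/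
def walsh (χ : AddChar K R) (f : U → W) (φ : Dual K W) (α : Dual K U) : R :=
  ∑ x, χ (φ (f x) + α x)

/-- Bentness of a vectorial function `f : U → W` with respect to `χ`. The inverse character plays
the role of complex conjugation: for finite `K` and `R = ℂ`, every Walsh coefficient of
every nonzero component has squared absolute value `|U|`, and for a `±1`-valued `χ` its square
is `|U|`. -/
def IsBent (χ : AddChar K R) (f : U → W) : Prop :=
  ∀ φ : Dual K W, φ ≠ 0 → ∀ α : Dual K U,
    walsh χ f φ α * walsh χ⁻¹ f φ α = (Fintype.card U : R)

end Walsh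

section MaioranaMcFarland

variable {K V W R : Type*} [Field K] [AddCommGroup V] [Module K V] [Fintype V]
  [AddCommGroup W] [Module K W] [CommRing R] [IsDomain R] {χ : AddChar K R}

theorem sum_addChar_dual (hχ : χ ≠ 1) (α : Dual K V) [Decidable (α = 0)] :
    ∑ x, χ (α x) = if α = 0 then (Fintype.card V : R) else 0 := by
  split_ifs with hα
  · simp [hα]
  · obtain ⟨k, hk⟩ := AddChar.ne_one_iff.1 hχ
    obtain ⟨v, rfl⟩ := LinearMap.surjective hα k
    have hne : χ.compAddMonoidHom α.toAddMonoidHom ≠ 0 := AddChar.ne_zero_iff.2 ⟨v, hk⟩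
    exact (AddChar.sum_eq_ite _).trans (if_neg hne)

theorem sum_addChar_maioranaMcFarland {Y : Type*} [Fintype Y] (hχ : χ ≠ 1) {π : Y → Dual K V}
    (hπ : Function.Injective π) {α : Dual K V} {y₀ : Y} (hy₀ : π y₀ = -α) (g : Y → K) :
    ∑ p : V × Y, χ (π p.2 p.1 + α p.1 + g p.2) = Fintype.card V * χ (g y₀) := by
  classical
  have hzero (y : Y) : π y + α = 0 ↔ y = y₀ := by
    rw [← eq_neg_iff_add_eq_zero, ← hy₀, hπ.eq_iff]
  have hinner (y : Y) :
      ∑ x, χ (π y x + α x + g y) = if y = y₀ then Fintype.card V * χ (g y) else 0 := by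
    simp only [χ.map_add_eq_mul _ (g y), ← Finset.sum_mul, ← LinearMap.add_apply,
      sum_addChar_dual hχ, hzero, ite_mul, zero_mul]
  simp only [Fintype.sum_prod_type_right, hinner, Finset.sum_ite_eq', Finset.mem_univ, if_true]

theorem isBent_maioranaMcFarland {V' : Type*} [AddCommGroup V'] [Module K V'] [Fintype V']
    (hχ : χ ≠ 1) {L : V' → V →ₗ[K] W}
    (hL : ∀ φ : Dual K W, φ ≠ 0 → Function.Bijective fun y => φ ∘ₗ L y) (h : V' → W) :
    IsBent χ fun p : V × V' => L p.2 p.1 + h p.2 := by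
  intro φ hφ α
  obtain ⟨y₀, hy₀⟩ := (hL φ hφ).2 (-(α ∘ₗ LinearMap.inl K V V'))
  let g (y : V') : K := φ (h y) + α (0, y)
  have hwalsh {ψ : AddChar K R} (hψ : ψ ≠ 1) :
      walsh ψ (fun p : V × V' => L p.2 p.1 + h p.2) φ α = Fintype.card V * ψ (g y₀) := by
    rw [← sum_addChar_maioranaMcFarland hψ (hL φ hφ).1 hy₀ g]
    refine Finset.sum_congr rfl fun p _ => congrArg ψ ?_
    have hα : α p = α (p.1, 0) + α (0, p.2) := by simp [← map_add]
    simp only [map_add, hα, LinearMap.comp_apply, LinearMap.inl_apply, g]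
    ring
  have hcard : Fintype.card V' = Fintype.card V := by
    obtain ⟨e⟩ := Basis.linearEquiv_dual_iff_finiteDimensional.2 (.of_finite : Module.Finite K V)
    exact Fintype.card_congr ((Equiv.ofBijective _ (hL φ hφ)).trans e.toEquiv.symm)
  calc walsh χ _ φ α * walsh χ⁻¹ _ φ α
      = Fintype.card V * χ (g y₀) * (Fintype.card V * χ⁻¹ (g y₀)) := by
        rw [hwalsh hχ, hwalsh (inv_ne_one.2 hχ)]
    _ = Fintype.card V * Fintype.card V * (χ * χ⁻¹) (g y₀) := by rw [AddChar.mul_apply]; ring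
    _ = (Fintype.card (V × V') : R) := by
        rw [mul_inv_cancel, AddChar.one_apply, mul_one, Fintype.card_prod, hcard, Nat.cast_mul]

end MaioranaMcFarland

theorem injective_comp_of_surjective_sub {K V W X I : Type*} [Ring K] [AddCommGroup V] [Module K V]
    [AddCommGroup W] [Module K W] [AddCommGroup X] [Module K X] {L : I → V →ₗ[K] W}
    (hL : Pairwise fun c d => Function.Surjective (L c - L d)) {φ : W →ₗ[K] X} (hφ : φ ≠ 0) :
    Function.Injective fun c => φ ∘ₗ L c := by
  intro c d hcd
  by_contra hne
  refine hφ ((LinearMap.cancel_right (hL hne)).1 ?_)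
  rw [LinearMap.comp_sub, LinearMap.zero_comp, sub_eq_zero]
  exact hcd

section Quasifield

variable {K V : Type*} [Field K] [AddCommGroup V] [Module K V]

theorem pairwise_surjective_sub_of_injective [FiniteDimensional K V] {I : Type*}
    {star : I → V →ₗ[K] V}
    (hstar : ∀ x ≠ 0, Function.Injective fun c => star c x) :
    Pairwise fun c d => Function.Surjective (star c - star d) := by
  intro c d hne
  rw [← LinearMap.injective_iff_surjective, injective_iff_map_eq_zero]
  intro x hx
  by_contra hx0
  exact hne (hstar x hx0 (sub_eq_zero.1 hx))

theorem bijective_dual_comp [Finite V] {star : V → V →ₗ[K] V}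
    (hstar : ∀ x ≠ 0, Function.Injective fun c => star c x) {φ : Dual K V} (hφ : φ ≠ 0) :
    Function.Bijective fun c => φ ∘ₗ star c := by
  have hinj := injective_comp_of_surjective_sub (pairwise_surjective_sub_of_injective hstar) hφ
  obtain ⟨e⟩ := Basis.linearEquiv_dual_iff_finiteDimensional.2 (.of_finite : Module.Finite K V)
  exact ⟨hinj, (Finite.injective_iff_surjective_of_equiv e.toEquiv).1 hinj⟩

theorem quasifield_type_is_bent_general [Fintype V] {W R : Type*} [AddCommGroup W] [Module K W]
    [CommRing R] [IsDomain R] {χ : AddChar K R} (hχ : χ ≠ 1) {star : V → V →ₗ[K] V}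
    (hstar : ∀ x ≠ 0, Function.Injective fun c => star c x)
    {τ : V →ₗ[K] W} (hτ : Function.Surjective τ) {σ : V → V} (hσ : Function.Bijective σ)
    (h : V → W) :
    IsBent χ fun p : V × V => τ (star (σ p.2) p.1) + h p.2 := by
  refine isBent_maioranaMcFarland (L := fun y => τ ∘ₗ star (σ y)) hχ (fun φ hφ => ?_) h
  have hφτ : φ ∘ₗ τ ≠ 0 := by
    rwa [← LinearMap.zero_comp τ, Ne, LinearMap.cancel_right hτ]
  exact (bijective_dual_comp hstar hφτ).comp hσ

end Quasifield

section Binary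

/-- `chi` as an additive character. -/
def chiAddChar : AddChar (ZMod 2) ℤ where
  toFun := chi
  map_zero_eq_one' := by decide
  map_add_eq_mul' := by decide

theorem chiAddChar_ne_one : chiAddChar ≠ 1 :=
  AddChar.ne_one_iff.2 ⟨1, by decide⟩

theorem inv_chiAddChar : chiAddChar⁻¹ = chiAddChar := by
  ext x
  rw [AddChar.inv_apply, ZMod.neg_eq_self_mod_two]

theorem traceForm_apply_ne_zero {K L : Type*} [Field K] [Field L] [Algebra K L]
    [FiniteDimensional K L] [Algebra.IsSeparable K L] {u : L} (hu : u ≠ 0) :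
    Algebra.traceForm K L u ≠ 0 :=
  fun h0 => hu ((traceForm_nondegenerate K L).1 u fun x => LinearMap.congr_fun h0 x)

theorem IsBent.sq_sum_chi_trace {F T : Type*} [Field F] [Fintype F] [Algebra (ZMod 2) F]
    [Field T] [Finite T] [Algebra (ZMod 2) T] {f : F × F → T} (hf : IsBent chiAddChar f)
    {u : T} (hu : u ≠ 0) (a b : F) :
    (∑ p : F × F, chi (Algebra.trace (ZMod 2) T (u * f p) + Algebra.trace (ZMod 2) F (a * p.1) +
      Algebra.trace (ZMod 2) F (b * p.2))) ^ 2 = (Nat.card F : ℤ) ^ 2 := by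
  have hwalsh := hf (Algebra.traceForm (ZMod 2) T u) (traceForm_apply_ne_zero hu)
    ((Algebra.traceForm (ZMod 2) F a).coprod (Algebra.traceForm (ZMod 2) F b))
  rw [inv_chiAddChar, ← sq, Fintype.card_prod, Nat.cast_mul, ← sq] at hwalsh
  simp only [add_assoc, Nat.card_eq_fintype_card]
  exact hwalsh

end Binary

theorem quasifield_type_is_bent
    (m t : ℕ) (hm : 0 < m) (ht : 0 < t) (htm : t ≤ m)
    (star : GaloisField 2 m → GaloisField 2 m → GaloisField 2 m)
    (hz1 : ∀ x, star x 0 = 0) (hz2 : ∀ x, star 0 x = 0)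
    (hdist : ∀ x y z, star x (y + z) = star x y + star x z)
    (hbij1 : ∀ a, a ≠ 0 → Function.Bijective fun x => star x a)
    (hbij2 : ∀ a, a ≠ 0 → Function.Bijective fun x => star a x)
    (τ : GaloisField 2 m →ₗ[ZMod 2] GaloisField 2 t) (hτ : Function.Surjective τ)
    (σ : GaloisField 2 m → GaloisField 2 m) (hσ : Function.Bijective σ)
    (h : GaloisField 2 m → GaloisField 2 t) :
    ∀ u : GaloisField 2 t, u ≠ 0 → ∀ a b : GaloisField 2 m,
      (∑ p : GaloisField 2 m × GaloisField 2 m,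
          chi (Algebra.trace (ZMod 2) (GaloisField 2 t) (u * (τ (star (σ p.2) p.1) + h p.2)) +
               Algebra.trace (ZMod 2) (GaloisField 2 m) (a * p.1) +
               Algebra.trace (ZMod 2) (GaloisField 2 m) (b * p.2))) ^ 2
        = 2 ^ (2 * m) := by
  intro u hu a b
  let starₗ (c : GaloisField 2 m) : GaloisField 2 m →ₗ[ZMod 2] GaloisField 2 m :=
    (AddMonoidHom.mk' (star c) (hdist c)).toZModLinearMap 2
  have hbent : IsBent chiAddChar fun p : GaloisField 2 m × GaloisField 2 m =>
      τ (star (σ p.2) p.1) + h p.2 :=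
    quasifield_type_is_bent_general chiAddChar_ne_one (star := starₗ)
      (fun x hx => (hbij1 x hx).1) hτ hσ h
  rw [hbent.sq_sum_chi_trace hu a b, GaloisField.card 2 m hm.ne', Nat.cast_pow, Nat.cast_ofNat,
    ← pow_mul, mul_comm]
end

section
/- Let n be a positive integer and S a Sidon set in the 𝔽₂-vector space V = (Fin n → ZMod 2). Then, as real numbers, |S| ≤ √(2^(n+1)) + 1/2 (i.e. |S| ≤ √2 · 2^(n/2) + 1/2). -/
/-!
A Sidon set `S` in an abelian group `G` attains each nonzero difference at most twice: if
`x - y = z - w` with `x ≠ y`, then `x + w = z + y`, so `(z, w)` is `(x, y)` or `(y, x)`; the latter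
occurs exactly when `2 (x - y) = 0`. Counting the `|S| (|S| - 1)` ordered pairs of distinct elements
by their differences gives `|S| (|S| - 1) ≤ 2 (|G| - 1)`, and completing the square
bounds `|S|`.
-/

open scoped Finset Pointwise

/-- Sidon sets, whose pairwise sums coincide only trivially. Requiring at most two distinct
summands, rather than `{x, y} = {z, w}`, admits `x + x = y + y`, which always holds over `𝔽₂`. -/
def IsSidon {G : Type*} [Add G] (S : Set G) : Prop :=
  ∀ x ∈ S, ∀ y ∈ S, ∀ z ∈ S, ∀ w ∈ S, x + y = z + w → ({x, y, z, w} : Set G).ncard ≤ 2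

lemma eq_or_eq_of_ncard_le_two {α : Type*} {s : Set α} (hs : s.Finite) (hcard : s.ncard ≤ 2)
    {x y z : α} (hx : x ∈ s) (hy : y ∈ s) (hz : z ∈ s) (hxy : x ≠ y) : z = x ∨ z = y := by
  by_contra! hne
  exact hcard.not_gt <|
    (Set.two_lt_ncard_iff hs).2 ⟨x, y, z, hx, hy, hz, hxy, hne.1.symm, hne.2.symm⟩

namespace IsSidon

variable {G : Type*} [AddCommGroup G]

lemma mk_eq_or_mk_eq_swap_of_sub_eq_sub {S : Set G} (hS : IsSidon S) {x y z w : G}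
    (hx : x ∈ S) (hy : y ∈ S) (hz : z ∈ S) (hw : w ∈ S) (hxy : x ≠ y) (h : x - y = z - w) :
    (z, w) = (x, y) ∨ (z, w) = (y, x) := by
  have hcard := hS x hx w hw z hz y hy (sub_eq_sub_iff_add_eq_add.1 h)
  have hpair : ∀ v ∈ ({x, w, z, y} : Set G), v = x ∨ v = y := fun v hv ↦
    eq_or_eq_of_ncard_le_two (Set.toFinite _) hcard (by simp) (by simp) hv hxy
  have hz' : z = x ∨ z = y := hpair z (by simp)
  have hw' : w = x ∨ w = y := hpair w (by simp)
  have hzw : z ≠ w := sub_ne_zero.1 (h ▸ sub_ne_zero.2 hxy)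
  grind

lemma card_filter_offDiag_sub_eq_le_two [DecidableEq G] {T : Finset G}
    (hT : IsSidon (T : Set G)) (d : G) :
    #{p ∈ T.offDiag | p.1 - p.2 = d} ≤ 2 := by
  obtain hempty | ⟨⟨x, y⟩, hxy⟩ := {p ∈ T.offDiag | p.1 - p.2 = d}.eq_empty_or_nonempty
  · simp [hempty]
  simp only [Finset.mem_filter, Finset.mem_offDiag] at hxy
  obtain ⟨⟨hx, hy, hne⟩, hd⟩ := hxy
  suffices hsub : {p ∈ T.offDiag | p.1 - p.2 = d} ⊆ {(x, y), (y, x)} from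
    (Finset.card_le_card hsub).trans Finset.card_le_two
  rintro ⟨z, w⟩ hzw
  simp only [Finset.mem_filter, Finset.mem_offDiag] at hzw
  obtain ⟨⟨hz, hw, -⟩, hd'⟩ := hzw
  simpa only [Finset.mem_insert, Finset.mem_singleton] using
    hT.mk_eq_or_mk_eq_swap_of_sub_eq_sub hx hy hz hw hne (hd.trans hd'.symm)

lemma card_offDiag_le_two_mul_card_sub_erase_zero [DecidableEq G] {T : Finset G}
    (hT : IsSidon (T : Set G)) :
    #T.offDiag ≤ 2 * #((T - T).erase 0) := by
  refine Finset.card_le_mul_card_image_of_maps_to (f := fun p ↦ p.1 - p.2) (fun p hp ↦ ?_) 2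
    fun d _ ↦ hT.card_filter_offDiag_sub_eq_le_two d
  obtain ⟨hx, hy, hne⟩ := Finset.mem_offDiag.1 hp
  exact Finset.mem_erase.2 ⟨sub_ne_zero.2 hne, Finset.sub_mem_sub hx hy⟩

lemma ncard_mul_ncard_sub_one_le [Finite G] {S : Set G} (hS : IsSidon S) :
    S.ncard * (S.ncard - 1) ≤ 2 * (Nat.card G - 1) := by
  classical
  have := Fintype.ofFinite G
  calc S.ncard * (S.ncard - 1)
      = #S.toFinset.offDiag := by
        rw [Finset.offDiag_card, Set.ncard_eq_toFinset_card', Nat.mul_sub_one]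
    _ ≤ 2 * #((S.toFinset - S.toFinset).erase 0) :=
        card_offDiag_le_two_mul_card_sub_erase_zero (by rwa [Set.coe_toFinset])
    _ ≤ 2 * #((Finset.univ : Finset G).erase 0) := by gcongr; exact Finset.subset_univ _
    _ = 2 * (Nat.card G - 1) := by
        rw [Finset.card_erase_of_mem (Finset.mem_univ _), Finset.card_univ,
          Nat.card_eq_fintype_card]

end IsSidon

lemma le_sqrt_add_half_of_mul_sub_one_add_le {a x : ℝ} (h : x * (x - 1) + 1 / 4 ≤ a) :
    x ≤ √a + 1 / 2 := by
  have hsq : (x - 1 / 2) ^ 2 ≤ a := by linarith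
  linarith [Real.le_sqrt_of_sq_le hsq]

theorem sidon_set_obvious_upper_bound_general {G : Type*} [AddCommGroup G] [Finite G]
    {S : Set G} (hS : IsSidon S) : (S.ncard : ℝ) ≤ √(2 * Nat.card G) + 1 / 2 := by
  have hcount : (S.ncard : ℝ) * (S.ncard - 1) ≤ 2 * (Nat.card G - 1) := by
    calc (S.ncard : ℝ) * (S.ncard - 1) = (S.ncard * (S.ncard - 1) : ℕ) := by
          cases S.ncard <;> simp
      _ ≤ (2 * (Nat.card G - 1) : ℕ) := mod_cast hS.ncard_mul_ncard_sub_one_le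
      _ = 2 * (Nat.card G - 1) := by rw [Nat.cast_mul, Nat.cast_pred Nat.card_pos, Nat.cast_ofNat]
  exact le_sqrt_add_half_of_mul_sub_one_add_le (by linarith)

theorem sidon_set_obvious_upper_bound
    (n : ℕ) (hn : 0 < n) (S : Set (Fin n → ZMod 2))
    (hS : ∀ x ∈ S, ∀ y ∈ S, ∀ z ∈ S, ∀ w ∈ S, x + y = z + w →
      ({x, y, z, w} : Set (Fin n → ZMod 2)).ncard ≤ 2) :
    (S.ncard : ℝ) ≤ Real.sqrt (2 ^ (n + 1)) + 1 / 2 := by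
  simpa [pow_succ'] using sidon_set_obvious_upper_bound_general (S := S) hS
end

section
/- Let n be a positive integer, F = GaloisField 2 n, and f : F → F. Then f is APN if and only if the graph G_f = {(x, f(x)) : x ∈ F} is a Sidon set in the 𝔽₂-vector space F × F. -/
/-!
Writing `a = x + y = z + w`, an additive quadruple of the graph of `f` is the same thing as two
points `x`, `z` of one fibre of `u ↦ f (u + a) + f u`. If `a ≠ 0`, the fibre is stable under the
fixed-point free involution `u ↦ u + a`, so it has at most two elements iff it is empty or a single
orbit `{x, x + a}`, i.e. iff the quadruples arising from it are degenerate. If `a = 0`, then `x = y`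
and `z = w`, so the quadruple is degenerate anyway.
-/

section SmallSets

variable {α : Type*} {S : Set α}

theorem eq_pair_of_encard_le_two {x y : α} (hS : S.encard ≤ 2) (hx : x ∈ S) (hy : y ∈ S)
    (hxy : x ≠ y) : S = {x, y} := by
  have hcard : S.encard ≤ ({x, y} : Set α).encard := hS.trans (Set.encard_pair hxy).ge
  exact ((Set.toFinite {x, y}).eq_of_subset_of_encard_le (Set.pair_subset hx hy) hcard).symm

theorem encard_pair_le_two (x y : α) : ({x, y} : Set α).encard ≤ 2 := by
  simpa [one_add_one_eq_two] using Set.encard_insert_le {y} x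

theorem encard_le_two_iff_of_mapsTo {σ : α → α} (hS : Set.MapsTo σ S S)
    (hσ : ∀ x ∈ S, x ≠ σ x) :
    S.encard ≤ 2 ↔ ∀ x ∈ S, ∀ y ∈ S, y = x ∨ y = σ x := by
  constructor
  · intro hcard x hx y hy
    have hpair : S = {x, σ x} := eq_pair_of_encard_le_two hcard hx (hS hx) (hσ x hx)
    exact hpair.subset hy
  · intro horbit
    rcases S.eq_empty_or_nonempty with rfl | ⟨x, hx⟩
    · simp
    · have hsub : S ⊆ {x, σ x} := horbit x hx
      exact (Set.encard_le_encard hsub).trans (encard_pair_le_two x (σ x))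

theorem encard_le_two_iff_ncard_le_two (hS : S.Finite) : S.encard ≤ 2 ↔ S.ncard ≤ 2 :=
  Set.encard_le_coe_iff_finite_ncard_le.trans (and_iff_right hS)

theorem encard_graph_quadruple {β : Type*} (f : α → β) (x y z w : α) :
    ({(x, f x), (y, f y), (z, f z), (w, f w)} : Set (α × β)).encard =
      ({x, y, z, w} : Set α).encard := by
  have graph_injective : Function.Injective fun u ↦ (u, f u) := fun _ _ h ↦ congrArg Prod.fst h
  simpa only [Set.image_insert_eq, Set.image_singleton] using
    graph_injective.encard_image {x, y, z, w}

end SmallSets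

/-- Almost perfect nonlinearity, in characteristic two, where `f (x + a) + f x` is the derivative
of `f` in direction `a`. Cardinalities are taken in `ℕ∞`, so that an infinite fibre violates the
condition. -/
def IsAPN {G H : Type*} [AddZeroClass G] [Add H] (f : G → H) : Prop :=
  ∀ a : G, a ≠ 0 → ∀ b : H, {x : G | f (x + a) + f x = b}.encard ≤ 2

/-- The Sidon property as it is used in vector spaces over `𝔽₂`, where `p + p = r + r` always holds
and hence must count as a trivial coincidence of sums. -/
def IsBinarySidon {V : Type*} [Add V] (S : Set V) : Prop :=
  ∀ p ∈ S, ∀ q ∈ S, ∀ r ∈ S, ∀ s ∈ S, p + q = r + s → ({p, q, r, s} : Set V).encard ≤ 2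

section ElementaryTwoGroups

variable {G H : Type*} [AddCommGroup G] [Module (ZMod 2) G]

theorem add_eq_zero_iff_eq_of_zmodTwo {x y : G} : x + y = 0 ↔ x = y := by
  rw [← ZModModule.sub_eq_add, sub_eq_zero]

theorem add_add_cancel_left_of_zmodTwo (x y : G) : x + (x + y) = y := by
  rw [← add_assoc, ZModModule.add_self, zero_add]

theorem encard_quadruple_le_two_iff {x y z w : G} (h : x + y = z + w) :
    ({x, y, z, w} : Set G).encard ≤ 2 ↔ x = y ∨ z = x ∨ z = y := by
  constructor
  · intro hcard
    refine or_iff_not_imp_left.mpr fun hxy ↦ ?_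
    have hpair : ({x, y, z, w} : Set G) = {x, y} :=
      eq_pair_of_encard_le_two hcard (by simp) (by simp) hxy
    exact hpair.subset (by simp : z ∈ ({x, y, z, w} : Set G))
  · rintro (rfl | rfl | rfl)
    · obtain rfl : z = w := add_eq_zero_iff_eq_of_zmodTwo.mp (h ▸ ZModModule.add_self x)
      simpa using encard_pair_le_two x z
    · obtain rfl : y = w := add_left_cancel h
      simpa [Set.insert_comm y] using encard_pair_le_two z y
    · obtain rfl : x = w := add_right_cancel (h.trans (add_comm z w))
      simpa [Set.insert_comm z, Set.pair_comm] using encard_pair_le_two x z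

theorem isBinarySidon_graph_iff [Add H] {f : G → H} :
    IsBinarySidon (Set.range fun x ↦ (x, f x)) ↔
      ∀ x y z w, x + y = z + w → f x + f y = f z + f w → x = y ∨ z = x ∨ z = y := by
  simp +contextual only [IsBinarySidon, Set.forall_mem_range, Prod.mk_add_mk, Prod.mk.injEq,
    and_imp, encard_graph_quadruple, encard_quadruple_le_two_iff]

variable [AddCommMagma H]

theorem encard_derivative_fiber_le_two_iff {f : G → H} {a : G} (ha : a ≠ 0) (b : H) :
    {x | f (x + a) + f x = b}.encard ≤ 2 ↔
      ∀ x, f (x + a) + f x = b → ∀ z, f (z + a) + f z = b → z = x ∨ z = x + a := by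
  refine encard_le_two_iff_of_mapsTo (σ := (· + a)) (fun x hx ↦ ?_) (fun x _ ↦ ?_)
  · rw [Set.mem_ofPred_eq, add_assoc, ZModModule.add_self, add_zero, add_comm]
    exact hx
  · exact (add_ne_left.mpr ha).symm

theorem isAPN_iff {f : G → H} :
    IsAPN f ↔
      ∀ x y z w, x + y = z + w → f x + f y = f z + f w → x = y ∨ z = x ∨ z = y := by
  constructor
  · intro hf x y z w hsum hfsum
    refine or_iff_not_imp_left.mpr fun hxy ↦ ?_
    have ha : x + y ≠ 0 := fun h ↦ hxy (add_eq_zero_iff_eq_of_zmodTwo.mp h)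
    have hy : x + (x + y) = y := add_add_cancel_left_of_zmodTwo x y
    have hw : z + (x + y) = w := by rw [hsum, add_add_cancel_left_of_zmodTwo]
    have hx_fiber : f (x + (x + y)) + f x = f x + f y := by rw [hy, add_comm]
    have hz_fiber : f (z + (x + y)) + f z = f x + f y := by rw [hw, hfsum, add_comm]
    have hz : z = x ∨ z = x + (x + y) :=
      (encard_derivative_fiber_le_two_iff ha _).mp (hf _ ha _) x hx_fiber z hz_fiber
    rwa [hy] at hz
  · intro hquad a ha b
    refine (encard_derivative_fiber_le_two_iff ha b).mpr fun x hx z hz ↦ ?_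
    have hsum : x + (x + a) = z + (z + a) := by
      rw [add_add_cancel_left_of_zmodTwo, add_add_cancel_left_of_zmodTwo]
    have hfsum : f x + f (x + a) = f z + f (z + a) := by
      rw [add_comm, hx, add_comm, hz]
    exact (hquad x (x + a) z (z + a) hsum hfsum).resolve_left (add_ne_left.mpr ha).symm

theorem apn_iff_graph_sidon_general (f : G → H) :
    IsAPN f ↔ IsBinarySidon (Set.range fun x ↦ (x, f x)) :=
  isAPN_iff.trans isBinarySidon_graph_iff.symm

end ElementaryTwoGroups

theorem apn_iff_graph_sidon
    (n : ℕ) (hn : 0 < n) (f : GaloisField 2 n → GaloisField 2 n) :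
    (∀ a : GaloisField 2 n, a ≠ 0 → ∀ b : GaloisField 2 n,
        {x : GaloisField 2 n | f (x + a) + f x = b}.ncard ≤ 2) ↔
      (∀ p ∈ Set.range (fun x : GaloisField 2 n => (x, f x)),
       ∀ q ∈ Set.range (fun x : GaloisField 2 n => (x, f x)),
       ∀ r ∈ Set.range (fun x : GaloisField 2 n => (x, f x)),
       ∀ s ∈ Set.range (fun x : GaloisField 2 n => (x, f x)),
        p + q = r + s →
          ({p, q, r, s} : Set (GaloisField 2 n × GaloisField 2 n)).ncard ≤ 2) := by
  simpa only [IsAPN, IsBinarySidon, encard_le_two_iff_ncard_le_two (Set.toFinite _)] using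
    apn_iff_graph_sidon_general f
end

section
/- Let n ≥ 2 be an even integer and F = GaloisField 2 n. Then the number of x ∈ F with x^(2^n − 2) = x^(2^(n/2)) equals 2^(n/2) + 2. (Consequently the Field Inverse Function agrees with the linear map x ↦ x^(2^(n/2)) in exactly 2^(n/2) + 2 points.) -/
/-!
On a finite field with `q ^ 2` elements, `x ^ (q ^ 2 - 2) = x⁻¹`, so apart from `x = 0` the equation
`x ^ (q ^ 2 - 2) = x ^ q` says `x ^ (q + 1) = 1`. As the unit group is cyclic of order
`q ^ 2 - 1 = (q + 1) * (q - 1)`, it contains exactly `q + 1` such elements.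
-/

section GroupWithZero

variable {G : Type*} [GroupWithZero G]

theorem pow_natCard_sub_two_eq_inv (hG : 2 < Nat.card G) (x : G) :
    x ^ (Nat.card G - 2) = x⁻¹ := by
  rcases eq_or_ne x 0 with rfl | hx
  · rw [inv_zero, zero_pow (Nat.sub_ne_zero_of_lt hG)]
  · lift x to Gˣ using hx.isUnit
    have hexp : Nat.card G - 2 + 1 = Nat.card Gˣ := by rw [Nat.card_units]; omega
    rw [← mul_eq_one_iff_eq_inv₀ hx, ← pow_succ, hexp]
    exact_mod_cast pow_card_eq_one' (x := x)

theorem inv_eq_pow_iff {k : ℕ} (hk : k ≠ 0) {x : G} :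
    x⁻¹ = x ^ k ↔ x = 0 ∨ x ^ (k + 1) = 1 := by
  rcases eq_or_ne x 0 with rfl | hx
  · simp [hk]
  · rw [← mul_eq_one_iff_inv_eq₀ hx, ← pow_succ', or_iff_right hx]

end GroupWithZero

section CyclicUnits

variable {G : Type*} [CommGroupWithZero G] [Finite G] [IsCyclic Gˣ]

theorem ncard_setOf_pow_eq_one {d : ℕ} (hd : d ≠ 0) :
    {x : G | x ^ d = 1}.ncard = (Nat.card G - 1).gcd d := by
  have himage : {x : G | x ^ d = 1} =
      Units.val '' ((powMonoidHom d : Gˣ →* Gˣ).ker : Set Gˣ) := by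
    ext x
    constructor
    · intro hx
      exact ⟨Units.ofPowEqOne x d hx hd, Units.pow_ofPowEqOne hx hd, rfl⟩
    · rintro ⟨u, hu, rfl⟩
      exact congrArg Units.val hu
  rw [himage, Set.ncard_image_of_injective _ Units.val_injective, ← Nat.card_coe_set_eq,
    SetLike.coe_sort_coe, IsCyclic.card_powMonoidHom_ker, Nat.card_units]

theorem ncard_setOf_inv_eq_pow {k : ℕ} (hk : k ≠ 0) :
    {x : G | x⁻¹ = x ^ k}.ncard = (Nat.card G - 1).gcd (k + 1) + 1 := by
  have hinsert : {x : G | x⁻¹ = x ^ k} = insert 0 {x | x ^ (k + 1) = 1} :=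
    Set.ext fun _ ↦ inv_eq_pow_iff hk
  rw [hinsert, Set.ncard_insert_of_notMem (by simp), ncard_setOf_pow_eq_one k.succ_ne_zero]

end CyclicUnits

theorem inverse_agrees_with_frobenius_power_general {K : Type*} [Field K] [Finite K] {q : ℕ}
    (hK : Nat.card K = q ^ 2) :
    {x : K | x ^ (q ^ 2 - 2) = x ^ q}.ncard = q + 2 := by
  have hq : 1 < q := (one_lt_sq_iff₀ q.zero_le).mp (hK ▸ Finite.one_lt_card)
  have hcard : 2 < Nat.card K := by rw [hK]; nlinarith
  have hdvd : q + 1 ∣ q ^ 2 - 1 := ⟨q - 1, by simpa using Nat.sq_sub_sq q 1⟩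
  calc {x : K | x ^ (q ^ 2 - 2) = x ^ q}.ncard
      = {x : K | x⁻¹ = x ^ q}.ncard := by simp only [← hK, pow_natCard_sub_two_eq_inv hcard]
    _ = (q ^ 2 - 1).gcd (q + 1) + 1 := by rw [ncard_setOf_inv_eq_pow (by omega), hK]
    _ = q + 2 := by rw [Nat.gcd_eq_right hdvd]

theorem inverse_agrees_with_frobenius_power
    (n : ℕ) (hn : 2 ≤ n) (hne : Even n) :
    {x : GaloisField 2 n | x ^ (2 ^ n - 2) = x ^ (2 ^ (n / 2))}.ncard =
      2 ^ (n / 2) + 2 := by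
  have hpow : 2 ^ n = (2 ^ (n / 2)) ^ 2 := by rw [← pow_mul, Nat.div_two_mul_two_of_even hne]
  simpa only [← hpow] using inverse_agrees_with_frobenius_power_general
    ((GaloisField.card 2 n (by omega)).trans hpow)
end
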